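/- arXiv:2401.05859 — 4 statements merged into one kernel-verified Lean document; each statement's English description precedes it below -/
import Mathlib

section
/- Let q > 2, n ≥ 2, and x, x' ∈ Σ_q^n. If VT(φ(x)_{[2,n]}) ≡ VT(φ(x')_{[2,n]}) (mod n), Sum(x) = Sum(x'), and there exists a common string y of length n−1 that is a subsequence of both x and x', then x = x'. (Equivalently, any x ∈ Σ_q^n can be uniquely recovered from VT(φ(x)_{[2,n]}), Sum(x), and any one of its subsequences of length n−1.) -/
/-!
Deleting letters from a word deletes bits from its signature, because the comparison `p ≤ r` always
has the same outcome as one of `p ≤ a` and `a ≤ r`. So if two words share a subsequence obtained by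
one deletion, then so do their signatures, and the signatures, having congruent VT weights, are
equal because the binary VT code corrects one deletion.

The two words themselves have, up to exchanging them, the form `u a s t` and `u s b t`. Equality of
the letter sums forces `a = b`. Equality of the signatures then says that each comparison of
neighbours in the closed walk `a s a` has the same outcome as the next one. The walk cannot descend
strictly from `a` to `a`, so it is weakly increasing, hence constant, and the two words agree.
-/

/-- The (unreduced) VT weight of a string `c = (c_1, …, c_m)`:
`Σ_{i=1}^m i·c_i`, with 1-indexed positions. -/
def vtSum (c : List ℕ) : ℕ := ∑ i ∈ Finset.range c.length, (i + 1) * c.getD i 0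

/-- For `x ∈ Σ_q^n`, this is `φ(x)_{[2,n]}`, i.e. the binary string of length
`n-1` whose `i`-th entry is `1` iff `x_{i+1} ≥ x_i`.  (The full signature
`φ(x)` is obtained by prepending a `0`, which carries no information.) -/
def phiTail (x : List ℕ) : List ℕ :=
  List.zipWith (fun a b => if a ≤ b then 1 else 0) x x.tail

section Shift

variable {α : Type*}

/-- `ShiftsTo x x'` says that `x = u a s t` and `x' = u s b t`: the word `x'` arises from `x` by
deleting a letter and inserting a letter at the same place or further right. -/
inductive ShiftsTo : List α → List α → Prop
  | intro (u s t : List α) (a b : α) : ShiftsTo (u ++ (a :: s) ++ t) (u ++ (s ++ [b]) ++ t)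

theorem exists_eq_append_cons_of_sublist {y x : List α} (h : y.Sublist x)
    (hlen : x.length = y.length + 1) : ∃ u v a, y = u ++ v ∧ x = u ++ a :: v := by
  induction h with
  | slnil => simp at hlen
  | @cons y x a h _ =>
    obtain rfl := h.eq_of_length (by simpa using hlen.symm)
    exact ⟨[], y, a, rfl, rfl⟩
  | @cons_cons y x b _ ih =>
    obtain ⟨u, v, a, rfl, rfl⟩ := ih (by simpa using hlen)
    exact ⟨b :: u, v, a, rfl, rfl⟩

theorem eq_or_shiftsTo_of_common_sublist {y x x' : List α} (hy : y.Sublist x) (hy' : y.Sublist x')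
    (hlen : x.length = x'.length) (hle : x.length ≤ y.length + 1) :
    x = x' ∨ ShiftsTo x x' ∨ ShiftsTo x' x := by
  rcases hy.length_le.eq_or_lt with heq | hlt
  · exact .inl ((hy.eq_of_length heq).symm.trans (hy'.eq_of_length (heq.trans hlen)))
  obtain ⟨u, v, a, rfl, rfl⟩ := exists_eq_append_cons_of_sublist hy (by omega)
  obtain ⟨u', v', b, huv, rfl⟩ := exists_eq_append_cons_of_sublist hy' (by omega)
  rcases List.append_eq_append_iff.1 huv with ⟨s, rfl, rfl⟩ | ⟨s, rfl, rfl⟩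
  · exact .inr (.inl (by simpa using ShiftsTo.intro u s v' a b))
  · exact .inr (.inr (by simpa using ShiftsTo.intro u' s v b a))

theorem cons_eq_append_singleton {a : α} {s : List α} (h : ∀ b ∈ s, b = a) :
    a :: s = s ++ [a] := by
  rw [List.eq_replicate_of_mem h, ← List.replicate_succ, ← List.replicate_succ']

theorem eq_of_sum_map_shift_eq {M : Type*} [AddCommMonoid M] [IsCancelAdd M]
    {w : α → M} {S : Set α} (hw : S.InjOn w) {u s t : List α} {a b : α} (ha : a ∈ S) (hb : b ∈ S)
    (hsum : ((u ++ (a :: s) ++ t).map w).sum = ((u ++ (s ++ [b]) ++ t).map w).sum) : a = b := by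
  refine hw ha hb (add_left_cancel (a := (u.map w).sum + (s.map w).sum + (t.map w).sum) ?_)
  simp only [List.map_append, List.map_cons, List.map_nil, List.sum_append, List.sum_cons,
    List.sum_nil] at hsum
  convert hsum using 1 <;> abel

end Shift

section VarshamovTenengolts

theorem sum_eq_sum_range_getD (c : List ℕ) :
    c.sum = ∑ i ∈ Finset.range c.length, c.getD i 0 := by
  induction c with
  | nil => simp
  | cons b c ih => simp [Finset.sum_range_succ', ih, add_comm]

theorem vtSum_cons (b : ℕ) (c : List ℕ) : vtSum (b :: c) = b + (vtSum c + c.sum) := by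
  rw [sum_eq_sum_range_getD, vtSum, vtSum, List.length_cons, Finset.sum_range_succ',
    ← Finset.sum_add_distrib, add_comm]
  simp [add_one_mul]

theorem vtSum_append (c d : List ℕ) :
    vtSum (c ++ d) = vtSum c + vtSum d + c.length * d.sum := by
  induction c with
  | nil => simp [vtSum]
  | cons b c ih =>
    simp only [List.cons_append, vtSum_cons, ih, List.sum_append, List.length_cons]
    ring

theorem vtSum_shift (u s t : List ℕ) (a b : ℕ) :
    vtSum (u ++ (a :: s) ++ t) + b * (u.length + s.length + 1) =
      vtSum (u ++ (s ++ [b]) ++ t) + (a * (u.length + 1) + s.sum) := by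
  have vtSum_nil : vtSum [] = 0 := rfl
  simp only [vtSum_append, vtSum_cons, vtSum_nil, List.length_append, List.length_cons,
    List.length_nil, List.sum_append, List.sum_cons, List.sum_nil]
  ring

theorem sum_le_length {s : List ℕ} (hs : ∀ b ∈ s, b ≤ 1) : s.sum ≤ s.length := by
  simpa using s.sum_le_card_nsmul 1 hs

theorem forall_eq_one_of_sum_eq_length {s : List ℕ} (hs : ∀ b ∈ s, b ≤ 1)
    (hsum : s.sum = s.length) : ∀ b ∈ s, b = 1 := by
  intro b hb
  obtain ⟨l, r, rfl⟩ := List.append_of_mem hb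
  have hl : l.sum ≤ l.length := sum_le_length fun c hc => hs c (by simp [hc])
  have hr : r.sum ≤ r.length := sum_le_length fun c hc => hs c (by simp [hc])
  have hb1 : b ≤ 1 := hs b hb
  simp only [List.sum_append, List.sum_cons, List.length_append, List.length_cons] at hsum
  omega

theorem eq_and_forall_eq_of_mul_add_sum_eq {s : List ℕ} {a b k : ℕ} (ha : a ≤ 1) (hb : b ≤ 1)
    (hs : ∀ c ∈ s, c ≤ 1) (h : a * (k + 1) + s.sum = b * (k + s.length + 1)) :
    a = b ∧ ∀ c ∈ s, c = a := by
  have hle : s.sum ≤ s.length := sum_le_length hs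
  interval_cases a <;> interval_cases b
  · exact ⟨rfl, List.sum_eq_zero_iff.1 (by omega)⟩
  · omega
  · omega
  · exact ⟨rfl, forall_eq_one_of_sum_eq_length hs (by omega)⟩

theorem ShiftsTo.eq_of_vtSum_modEq {c c' : List ℕ} (h : ShiftsTo c c') (hc : ∀ b ∈ c, b ≤ 1)
    (hc' : ∀ b ∈ c', b ≤ 1) (hvt : vtSum c ≡ vtSum c' [MOD c.length + 1]) : c = c' := by
  obtain ⟨u, s, t, a, b⟩ := h
  have ha : a ≤ 1 := hc a (by simp)
  have hb : b ≤ 1 := hc' b (by simp)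
  have hs : ∀ e ∈ s, e ≤ 1 := fun e he => hc e (by simp [he])
  have hle : s.sum ≤ s.length := sum_le_length hs
  have hmod : b * (u.length + s.length + 1) ≡ a * (u.length + 1) + s.sum
      [MOD (u ++ (a :: s) ++ t).length + 1] :=
    hvt.add_left_cancel (congrArg (· % _) (vtSum_shift u s t a b))
  -- Both sides are smaller than the modulus.
  have heq : b * (u.length + s.length + 1) = a * (u.length + 1) + s.sum := by
    simp only [List.length_append, List.length_cons] at hmod
    exact hmod.eq_of_lt_of_lt (by nlinarith) (by nlinarith)
  obtain ⟨rfl, hconst⟩ := eq_and_forall_eq_of_mul_add_sum_eq ha hb hs heq.symm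
  rw [cons_eq_append_singleton hconst]

theorem eq_of_common_sublist_of_vtSum_modEq {d c c' : List ℕ} (hd : d.Sublist c)
    (hd' : d.Sublist c') (hlen : c.length = c'.length) (hle : c.length ≤ d.length + 1)
    (hc : ∀ b ∈ c, b ≤ 1) (hc' : ∀ b ∈ c', b ≤ 1)
    (hvt : vtSum c ≡ vtSum c' [MOD c.length + 1]) : c = c' := by
  rcases eq_or_shiftsTo_of_common_sublist hd hd' hlen hle with rfl | h | h
  · rfl
  · exact h.eq_of_vtSum_modEq hc hc' hvt
  · exact (h.eq_of_vtSum_modEq hc' hc (hlen ▸ hvt.symm)).symm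

end VarshamovTenengolts

section Signature

variable {α : Type*} [LinearOrder α]

/-- The signature `φ(x)_{[2,n]}` of a word over any linearly ordered alphabet: its `i`-th bit is `1`
iff `x_i ≤ x_{i+1}`. For the alphabet `ℕ` it is definitionally `phiTail`. -/
def signature (x : List α) : List ℕ :=
  List.zipWith (fun a b => if a ≤ b then 1 else 0) x x.tail

theorem signature_cons_cons (a b : α) (x : List α) :
    signature (a :: b :: x) = (if a ≤ b then 1 else 0) :: signature (b :: x) := rfl

theorem signature_cons_cons_eq_iff {a b c d : α} {x y : List α} :
    signature (a :: b :: x) = signature (c :: d :: y) ↔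
      (a ≤ b ↔ c ≤ d) ∧ signature (b :: x) = signature (d :: y) := by
  rw [signature_cons_cons, signature_cons_cons, List.cons.injEq]
  refine and_congr_left' ?_
  split_ifs with hab hcd hcd <;> simp [hab, hcd]

theorem length_signature (x : List α) : (signature x).length = x.length - 1 := by
  simp [signature]

theorem le_one_of_mem_signature {x : List α} {b : ℕ} (hb : b ∈ signature x) : b ≤ 1 := by
  obtain ⟨i, hi, rfl⟩ := List.getElem_of_mem hb
  simp only [signature, List.getElem_zipWith]
  split_ifs <;> simp

theorem signature_drop (k : ℕ) (x : List α) : signature (x.drop k) = (signature x).drop k := by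
  simp [signature, List.drop_zipWith, List.tail_drop]

theorem signature_take (k : ℕ) (x : List α) :
    signature (x.take k) = (signature x).take (k - 1) :=
  List.ext_getElem (by grind [length_signature]) (by simp [signature])

theorem signature_eq_of_append_eq {u x x' t : List α} (hlen : x.length = x'.length)
    (h : signature (u ++ x ++ t) = signature (u ++ x' ++ t)) : signature x = signature x' := by
  have hfactor (z : List α) :
      signature z = ((signature (u ++ z ++ t)).drop u.length).take (z.length - 1) := by
    rw [← signature_drop, ← signature_take]
    simp
  rw [hfactor x, hfactor x', h, hlen]

theorem signature_cons_sublist (a : α) (x : List α) :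
    (signature x).Sublist (signature (a :: x)) := by
  cases x with
  | nil => exact .slnil
  | cons b x => exact List.sublist_cons_self _ _

theorem signature_cons_sublist_cons_cons (p a : α) (x : List α) :
    (signature (p :: x)).Sublist (signature (p :: a :: x)) := by
  cases x with
  | nil => exact List.nil_sublist _
  | cons r x =>
    simp only [signature_cons_cons]
    by_cases hpa : p ≤ r ↔ p ≤ a
    · simp only [hpa]
      exact (List.sublist_cons_self _ _).cons_cons _
    · have har : p ≤ r ↔ a ≤ r := by grind
      simp only [har]
      exact List.sublist_cons_self _ _

theorem signature_cons_sublist_cons {y x : List α} (h : y.Sublist x) (p : α) :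
    (signature (p :: y)).Sublist (signature (p :: x)) := by
  induction h generalizing p with
  | slnil => exact .refl _
  | @cons y x a _ ih =>
    exact (signature_cons_sublist_cons_cons p a y).trans ((ih a).cons_cons _)
  | cons_cons a _ ih => exact (ih a).cons_cons _

theorem signature_sublist {y x : List α} (h : y.Sublist x) :
    (signature y).Sublist (signature x) := by
  induction h with
  | slnil => exact .refl _
  | cons a _ ih => exact ih.trans (signature_cons_sublist a _)
  | cons_cons a h _ => exact signature_cons_sublist_cons h a

theorem isChain_le_or_isChain_gt_of_signature_eq {s : List α} {a c : α}
    (h : signature (c :: s) = signature (s ++ [a])) :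
    List.IsChain (· ≤ ·) (c :: (s ++ [a])) ∨ List.IsChain (· > ·) (c :: (s ++ [a])) := by
  induction s generalizing c with
  | nil => simpa using le_or_gt c a
  | cons r s ih =>
    obtain ⟨r', z, hz⟩ := List.exists_cons_of_ne_nil (l := s ++ [a]) (by simp)
    rw [List.cons_append, hz, signature_cons_cons_eq_iff, ← hz] at h
    obtain ⟨hbit, htail⟩ := h
    have hchain := ih htail
    simp only [List.cons_append, hz, List.isChain_cons_cons] at hchain ⊢
    exact hchain.imp (fun hle => ⟨hbit.2 hle.1, hle⟩)
      fun hgt => ⟨not_le.1 (mt hbit.1 hgt.1.not_ge), hgt⟩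

theorem cons_eq_append_singleton_of_signature_eq {s : List α} {a : α}
    (h : signature (a :: s) = signature (s ++ [a])) : a :: s = s ++ [a] := by
  rcases isChain_le_or_isChain_gt_of_signature_eq h with hle | hgt
  · refine cons_eq_append_singleton fun b hb => ?_
    obtain ⟨hfirst, hrest⟩ := List.pairwise_cons.1 hle.pairwise
    have hlast := (List.pairwise_append.1 hrest).2.2
    exact le_antisymm (hlast b hb a (by simp)) (hfirst b (by simp [hb]))
  · exact absurd ((List.pairwise_cons.1 hgt.pairwise).1 a (by simp)) (lt_irrefl a)

theorem signature_eq_of_common_sublist {y x x' : List α} (hy : y.Sublist x) (hy' : y.Sublist x')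
    (hlen : x.length = x'.length) (hle : x.length ≤ y.length + 1)
    (hvt : vtSum (signature x) ≡ vtSum (signature x') [MOD x.length]) :
    signature x = signature x' := by
  rcases x.length.eq_zero_or_pos with hzero | hpos
  · obtain rfl := List.length_eq_zero_iff.1 hzero
    obtain rfl := List.length_eq_zero_iff.1 hlen.symm
    rfl
  apply eq_of_common_sublist_of_vtSum_modEq (signature_sublist hy) (signature_sublist hy')
  · simp only [length_signature, hlen]
  · simp only [length_signature]
    omega
  · exact fun _ => le_one_of_mem_signature
  · exact fun _ => le_one_of_mem_signature
  · rwa [length_signature, Nat.sub_add_cancel hpos]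

end Signature

section General

variable {α M : Type*} [LinearOrder α] [AddCommMonoid M] [IsCancelAdd M] {w : α → M} {S : Set α}

theorem ShiftsTo.eq_of_signature_eq_of_sum_map_eq {x x' : List α} (h : ShiftsTo x x')
    (hw : S.InjOn w) (hx : ∀ a ∈ x, a ∈ S) (hx' : ∀ a ∈ x', a ∈ S)
    (hsig : signature x = signature x') (hsum : (x.map w).sum = (x'.map w).sum) : x = x' := by
  obtain ⟨u, s, t, a, b⟩ := h
  obtain rfl : a = b :=
    eq_of_sum_map_shift_eq hw (hx a (by simp)) (hx' b (by simp)) hsum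
  have hwalk : signature (a :: s) = signature (s ++ [a]) :=
    signature_eq_of_append_eq (by simp) hsig
  rw [cons_eq_append_singleton_of_signature_eq hwalk]

theorem q_ary_single_deletion_code_general {y x x' : List α} (hw : S.InjOn w)
    (hx : ∀ a ∈ x, a ∈ S) (hx' : ∀ a ∈ x', a ∈ S) (hlen : x.length = x'.length)
    (hvt : vtSum (signature x) ≡ vtSum (signature x') [MOD x.length])
    (hsum : (x.map w).sum = (x'.map w).sum)
    (hy : y.Sublist x) (hy' : y.Sublist x') (hle : x.length ≤ y.length + 1) : x = x' := by
  have hsig : signature x = signature x' :=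
    signature_eq_of_common_sublist hy hy' hlen hle hvt
  rcases eq_or_shiftsTo_of_common_sublist hy hy' hlen hle with rfl | h | h
  · rfl
  · exact h.eq_of_signature_eq_of_sum_map_eq hw hx hx' hsig hsum
  · exact (h.eq_of_signature_eq_of_sum_map_eq hw hx' hx hsig.symm hsum.symm).symm

end General

/-- Tenengolts: for `q > 2` and `n ≥ 2`, if `x, x' ∈ Σ_q^n`
satisfy `VT(φ(x)_{[2,n]}) ≡ VT(φ(x')_{[2,n]}) (mod n)`, `Sum(x) = Sum(x')`
(mod q), and they share a common subsequence of length `n-1`, then `x = x'`. -/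
theorem q_ary_single_deletion_code
    (q n : ℕ) (hq : 2 < q) (hn : 2 ≤ n) (x x' : List ℕ)
    (hx : x.length = n) (hx' : x'.length = n)
    (ha : ∀ a ∈ x, a < q) (ha' : ∀ a ∈ x', a < q)
    (hvt : vtSum (phiTail x) % n = vtSum (phiTail x') % n)
    (hsum : x.sum % q = x'.sum % q)
    (hy : ∃ y : List ℕ, y.length = n - 1 ∧ y.Sublist x ∧ y.Sublist x') :
    x = x' := by
  obtain ⟨y, hlen, hy, hy'⟩ := hy
  have hsum' : (x.map ((↑) : ℕ → ZMod q)).sum = (x'.map (↑)).sum := by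
    simpa only [← Nat.cast_list_sum] using (ZMod.natCast_eq_natCast_iff _ _ _).2 hsum
  exact q_ary_single_deletion_code_general (CharP.natCast_injOn_Iio (ZMod q) q) ha ha'
    (hx.trans hx'.symm) (hx ▸ hvt) hsum' hy hy' (by omega)
end

section
/- Fix integers q > 2, t ≥ 1, and a real ε > 0. There exists n_0 such that for every n ≥ n_0 there is a function h : Σ_q^n → {0, 1, …, ⌈n^{4+ε}⌉ − 1} with the property that for all x, x' ∈ Σ_q^n with x ≠ x' and B_{≤t}(x) ∩ B_{≤t}(x') ≠ ∅, one has h(x) ≠ h(x'). (Consequently, any x ∈ Σ_q^n can be uniquely recovered from h(x) and any y ∈ B_{≤t}(x), using a sketch of 4·log_2 n + o(log_2 n) bits.) -/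
/-!
Join two words of equal length over a finite alphabet when their burst-deletion balls meet. Two such
words lose equally many symbols on the way to a common descendant, so every neighbour of `x` arises
from `x` by deleting a burst of some length `s ≤ t` and inserting a word of length `s` somewhere.
Hence `x` has only `O(|x|²)` neighbours, and a greedy colouring, which gives each vertex a colour at
most its degree, is a sketch separating all confusable words.
-/

/-- `burst t' x` is the set `B_{t'}(x)` of strings obtained from `x` by
deleting `t'` consecutive symbols. -/
def burst (t' : ℕ) (x : List ℕ) : Set (List ℕ) :=
  {y | ∃ i, i + t' ≤ x.length ∧ y = x.take i ++ x.drop (i + t')}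

/-- `burstLe t x` is the set `B_{≤t}(x) = ∪_{t'=0}^{t} B_{t'}(x)`. -/
def burstLe (t : ℕ) (x : List ℕ) : Set (List ℕ) :=
  {y | ∃ t' ≤ t, y ∈ burst t' x}

open Filter Finset

theorem exists_coloring_le_degree {V : Type*} (G : SimpleGraph V) [G.LocallyFinite] :
    ∃ C : G.Coloring ℕ, ∀ v, C v ≤ G.degree v := by
  classical
  have wf : WellFounded (WellOrderingRel (α := V)) := IsWellFounded.wf
  obtain ⟨f, hf⟩ : ∃ f : V → ℕ, ∀ v,
      f v = sInf {c | ∀ u, WellOrderingRel u v → G.Adj v u → c ≠ f u} :=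
    ⟨wf.fix fun v f ↦ sInf {c | ∀ u (h : WellOrderingRel u v), G.Adj v u → c ≠ f u h},
      fun v ↦ wf.fix_eq _ v⟩
  have exists_free (v : V) :
      ∃ c ≤ G.degree v, c ∈ {c | ∀ u, WellOrderingRel u v → G.Adj v u → c ≠ f u} := by
    have hcard : #((G.neighborFinset v).image f) < #(range (G.degree v + 1)) := by
      rw [card_range]
      exact Nat.lt_succ_of_le card_image_le
    obtain ⟨c, hc, hcf⟩ := exists_mem_notMem_of_card_lt_card hcard
    refine ⟨c, mem_range_succ_iff.1 hc, fun u _ hu h ↦ hcf ?_⟩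
    exact mem_image.2 ⟨u, (G.mem_neighborFinset v u).2 hu, h.symm⟩
  have ne_of_earlier (v u : V) (huv : WellOrderingRel u v) (h : G.Adj v u) : f v ≠ f u := by
    obtain ⟨c, -, hc⟩ := exists_free v
    rw [hf v]
    exact Nat.sInf_mem ⟨c, hc⟩ u huv h
  refine ⟨SimpleGraph.Coloring.mk f fun {v w} h ↦ ?_, fun v ↦ ?_⟩
  · rcases trichotomous_of WellOrderingRel v w with hvw | rfl | hwv
    · exact (ne_of_earlier w v hvw h.symm).symm
    · exact absurd h G.irrefl
    · exact ne_of_earlier v w hwv h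
  · obtain ⟨c, hcv, hc⟩ := exists_free v
    exact (hf v).trans_le ((Nat.sInf_le hc).trans hcv)

section BurstReplacement

variable {α : Type*}

/-- The words of length `n` over the alphabet `A`. -/
def wordsOver (A : Finset α) (n : ℕ) : Finset (List α) :=
  (Fintype.piFinset fun _ : Fin n ↦ A).map ⟨List.ofFn, List.ofFn_injective⟩

theorem mem_wordsOver {A : Finset α} {n : ℕ} {w : List α} :
    w ∈ wordsOver A n ↔ w.length = n ∧ ∀ a ∈ w, a ∈ A := by
  simp only [wordsOver, Finset.mem_map, Fintype.mem_piFinset, Function.Embedding.coeFn_mk]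
  constructor
  · rintro ⟨f, hf, rfl⟩
    simpa [List.forall_mem_ofFn_iff] using hf
  · rintro ⟨rfl, hw⟩
    exact ⟨w.get, fun k ↦ hw _ (w.get_mem k), List.ofFn_get w⟩

theorem card_wordsOver (A : Finset α) (n : ℕ) : #(wordsOver A n) = #A ^ n := by
  simp [wordsOver]

/-- The word obtained from `y` by inserting the word `w` at position `j`; it undoes a burst deletion
`List.dropSlice`. -/
def insertSlice (j : ℕ) (w y : List α) : List α :=
  y.take j ++ w ++ y.drop j

theorem insertSlice_dropSlice (j s : ℕ) (x : List α) :
    insertSlice j ((x.drop j).take s) (x.dropSlice j s) = x := by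
  rcases le_total j x.length with hj | hj
  · have htake : (x.dropSlice j s).take j = x.take j := by
      rw [List.dropSlice_eq, List.take_left' (List.length_take_of_le hj)]
    have hdrop : (x.dropSlice j s).drop j = (x.drop j).drop s := by
      rw [List.dropSlice_eq, List.drop_left' (List.length_take_of_le hj), List.drop_drop]
    rw [insertSlice, htake, hdrop, List.append_assoc, List.take_append_drop, List.take_append_drop]
  · have hdrop : x.dropSlice j s = x := by
      rw [List.dropSlice_eq, List.take_of_length_le hj, List.drop_of_length_le (by omega),
        List.append_nil]
    rw [insertSlice, hdrop, List.drop_of_length_le hj, List.take_of_length_le hj, List.take_nil,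
      List.append_nil, List.append_nil]

variable [DecidableEq α]

/-- The words obtained from `x` by deleting a burst of some length `s ≤ t` and then inserting, at a
possibly different position, a word of the same length `s` over `A`. -/
def burstReplacements (A : Finset α) (t : ℕ) (x : List α) : Finset (List α) :=
  (range (t + 1)).biUnion fun s ↦
    (range (x.length + 1) ×ˢ range (x.length + 1) ×ˢ wordsOver A s).image fun p ↦
      insertSlice p.2.1 p.2.2 (x.dropSlice p.1 s)

theorem mem_burstReplacements {A : Finset α} {t : ℕ} {x x' : List α} :
    x' ∈ burstReplacements A t x ↔ ∃ s ≤ t, ∃ i ≤ x.length, ∃ j ≤ x.length,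
      ∃ w ∈ wordsOver A s, insertSlice j w (x.dropSlice i s) = x' := by
  simp [burstReplacements, and_assoc]

theorem self_mem_burstReplacements (A : Finset α) (t : ℕ) (x : List α) :
    x ∈ burstReplacements A t x :=
  mem_burstReplacements.2 ⟨0, t.zero_le, 0, Nat.zero_le _, 0, Nat.zero_le _, [],
    mem_wordsOver.2 (by simp), insertSlice_dropSlice 0 0 x⟩

theorem card_burstReplacements_le (A : Finset α) (t : ℕ) (x : List α) :
    #(burstReplacements A t x) ≤ (x.length + 1) ^ 2 * ∑ s ∈ range (t + 1), #A ^ s := by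
  rw [mul_sum]
  refine card_biUnion_le.trans (sum_le_sum fun s _ ↦ card_image_le.trans_eq ?_)
  simp only [card_product, card_range, card_wordsOver]
  ring

end BurstReplacement

theorem mem_burst_iff {s : ℕ} {x y : List ℕ} :
    y ∈ burst s x ↔ ∃ i, i + s ≤ x.length ∧ y = x.dropSlice i s := by
  simp only [burst, Set.mem_ofPred_eq, List.dropSlice_eq]

theorem length_add_of_mem_burst {s : ℕ} {x y : List ℕ} (h : y ∈ burst s x) :
    y.length + s = x.length := by
  obtain ⟨i, hi, rfl⟩ := h
  simp only [List.length_append, List.length_take, List.length_drop]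
  omega

theorem mem_burstReplacements_of_burstLe_inter {A : Finset ℕ} {t : ℕ} {x x' : List ℕ}
    (hlen : x.length = x'.length) (hx' : ∀ a ∈ x', a ∈ A)
    (h : (burstLe t x ∩ burstLe t x').Nonempty) : x' ∈ burstReplacements A t x := by
  obtain ⟨y, ⟨s, hs, hy⟩, ⟨s', -, hy'⟩⟩ := h
  obtain rfl : s = s' := by
    have := length_add_of_mem_burst hy
    have := length_add_of_mem_burst hy'
    omega
  obtain ⟨i, hi, hyi⟩ := mem_burst_iff.1 hy
  obtain ⟨j, hj, hyj⟩ := mem_burst_iff.1 hy'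
  have hdeleted : (x'.drop j).take s ∈ wordsOver A s := by
    refine mem_wordsOver.2 ⟨?_, fun a ha ↦ hx' a (List.mem_of_mem_drop (List.mem_of_mem_take ha))⟩
    rw [List.length_take, List.length_drop]
    omega
  refine mem_burstReplacements.2 ⟨s, hs, i, by omega, j, by omega, _, hdeleted, ?_⟩
  rw [← hyi, hyj, insertSlice_dropSlice]

/-- The confusability graph of burst deletions: distinct words of the same length over `A` are
adjacent when their burst-deletion balls of radius `t` meet. Words with letters outside `A` are
isolated. -/
def burstGraph (A : Finset ℕ) (t : ℕ) : SimpleGraph (List ℕ) where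
  Adj x x' := x ≠ x' ∧ x.length = x'.length ∧ (∀ a ∈ x, a ∈ A) ∧ (∀ a ∈ x', a ∈ A) ∧
    (burstLe t x ∩ burstLe t x').Nonempty
  symm := ⟨fun _ _ ⟨hne, hlen, hx, hx', h⟩ ↦ ⟨hne.symm, hlen.symm, hx', hx, Set.inter_comm _ _ ▸ h⟩⟩
  loopless := ⟨fun _ h ↦ h.1 rfl⟩

theorem neighborSet_burstGraph_subset (A : Finset ℕ) (t : ℕ) (x : List ℕ) :
    (burstGraph A t).neighborSet x ⊆ burstReplacements A t x :=
  fun _ ⟨_, hlen, _, hx', h⟩ ↦ mem_burstReplacements_of_burstLe_inter hlen hx' h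

noncomputable instance (A : Finset ℕ) (t : ℕ) : (burstGraph A t).LocallyFinite :=
  fun x ↦ ((finite_toSet _).subset (neighborSet_burstGraph_subset A t x)).fintype

theorem degree_burstGraph_lt (A : Finset ℕ) (t : ℕ) (x : List ℕ) :
    (burstGraph A t).degree x < (x.length + 1) ^ 2 * ∑ s ∈ range (t + 1), #A ^ s := by
  have hss : (burstGraph A t).neighborFinset x ⊂ burstReplacements A t x := by
    refine (ssubset_iff_of_subset fun x' hx' ↦ ?_).2
      ⟨x, self_mem_burstReplacements A t x, SimpleGraph.notMem_neighborFinset_self _ x⟩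
    exact neighborSet_burstGraph_subset A t x ((SimpleGraph.mem_neighborFinset _ _ _).1 hx')
  exact (card_lt_card hss).trans_le (card_burstReplacements_le A t x)

theorem exists_burst_sketch (A : Finset ℕ) (t : ℕ) :
    ∃ h : List ℕ → ℕ,
      (∀ x, h x < (x.length + 1) ^ 2 * ∑ s ∈ range (t + 1), #A ^ s) ∧
      (∀ x x' : List ℕ, x.length = x'.length → (∀ a ∈ x, a ∈ A) → (∀ a ∈ x', a ∈ A) → x ≠ x' →
        (burstLe t x ∩ burstLe t x').Nonempty → h x ≠ h x') := by
  obtain ⟨C, hC⟩ := exists_coloring_le_degree (burstGraph A t)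
  exact ⟨C, fun x ↦ (hC x).trans_lt (degree_burstGraph_lt A t x),
    fun x x' hlen hx hx' hne h ↦ C.valid ⟨hne, hlen, hx, hx', h⟩⟩

theorem eventually_succ_pow_mul_lt_ceil_rpow {k : ℕ} {s : ℝ} (hks : k < s) (c : ℕ) :
    ∀ᶠ n : ℕ in atTop, (n + 1) ^ k * c < ⌈(n : ℝ) ^ s⌉₊ := by
  have hgrowth : ∀ᶠ n : ℕ in atTop, (2 ^ k * c : ℝ) < (n : ℝ) ^ (s - k) :=
    ((tendsto_rpow_atTop (sub_pos.2 hks)).comp tendsto_natCast_atTop_atTop).eventually_gt_atTop _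
  filter_upwards [hgrowth, eventually_ge_atTop 1] with n hn hn1
  have hn1' : (1 : ℝ) ≤ n := by exact_mod_cast hn1
  rw [Nat.lt_ceil]
  push_cast
  calc ((n : ℝ) + 1) ^ k * c
      ≤ (2 * n) ^ k * c := by gcongr; linarith
    _ = n ^ k * (2 ^ k * c) := by ring
    _ < n ^ k * (n : ℝ) ^ (s - k) := by gcongr
    _ = (n : ℝ) ^ s := by
      rw [← Real.rpow_natCast, ← Real.rpow_add (by linarith), add_sub_cancel]

theorem exists_small_sketch_burst_general (q t : ℕ) {s : ℝ} (hs : 2 < s) :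
    ∃ n₀ : ℕ, ∀ n ≥ n₀, ∃ h : List ℕ → ℕ,
      (∀ x : List ℕ, x.length = n → (∀ a ∈ x, a < q) → h x < ⌈(n : ℝ) ^ s⌉₊) ∧
      (∀ x x' : List ℕ, x.length = n → x'.length = n →
        (∀ a ∈ x, a < q) → (∀ a ∈ x', a < q) → x ≠ x' →
        (burstLe t x ∩ burstLe t x').Nonempty → h x ≠ h x') := by
  obtain ⟨h, hlt, hsep⟩ := exists_burst_sketch (range q) t
  simp only [mem_range] at hsep
  have hbound := eventually_succ_pow_mul_lt_ceil_rpow (k := 2) (by exact_mod_cast hs)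
    (∑ s ∈ range (t + 1), #(range q) ^ s)
  obtain ⟨n₀, hn₀⟩ := eventually_atTop.1 hbound
  refine ⟨n₀, fun n hn ↦ ⟨h, ?_, fun x x' hx hx' ↦ hsep x x' (hx.trans hx'.symm)⟩⟩
  rintro x rfl -
  exact (hlt x).trans (hn₀ _ hn)

/-- for fixed `q > 2`, `t ≥ 1` and `ε > 0`, for all large
enough `n` there is a sketch `h : Σ_q^n → {0, …, ⌈n^{4+ε}⌉ - 1}` separating
any two distinct strings whose burst-deletion balls of radius `≤ t`
intersect.  Hence any `x ∈ Σ_q^n` can be recovered from `h(x)` (of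
`4·log₂ n + o(log₂ n)` bits) and any `y ∈ B_{≤t}(x)`. -/
theorem exists_small_sketch_burst
    (q t : ℕ) (ε : ℝ) (hq : 2 < q) (ht : 1 ≤ t) (hε : 0 < ε) :
    ∃ n₀ : ℕ, ∀ n ≥ n₀, ∃ h : List ℕ → ℕ,
      (∀ x : List ℕ, x.length = n → (∀ a ∈ x, a < q) →
        h x < ⌈(n : ℝ) ^ ((4 : ℝ) + ε)⌉₊) ∧
      (∀ x x' : List ℕ, x.length = n → x'.length = n →
        (∀ a ∈ x, a < q) → (∀ a ∈ x', a < q) → x ≠ x' →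
        (burstLe t x ∩ burstLe t x').Nonempty → h x ≠ h x') :=
  exists_small_sketch_burst_general q t (by linarith)
end

section
/- Fix integers q ≥ 2 and t ≥ 1, let p = 0^t1^t, and for n ≥ 1 let δ = 2t·q^{2t}·⌈log_2 n⌉. For each t' ∈ {1,…,t} there exists a function Loc taking as input a residue r_0 ∈ Z_4, a residue r_1 ∈ Z_{2n}, and a string y ∈ Σ_q^{n−t'}, and outputting an interval L ⊆ [1,n], such that: for every (p,δ)-dense x ∈ Σ_q^n and every y ∈ B_{t'}(x), the interval L = Loc(a_0(x) mod 4, a_1(x) mod 2n, y) has length at most 3δ and there exists an interval D ⊆ L of size t' with y = x_{[1,n]∖D}. In other words, from a_0(x) mod 4, a_1(x) mod 2n and y alone one can determine an interval of length at most 3δ that contains the positions of the burst of deletions. -/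
/-!
Occurrences of `0^t 1^t` are pairwise disjoint, so deleting a block of `s ≤ t` symbols at position
`d` destroys at most two of them and creates at most one, and it creates none when it destroys two.
Hence `k = a₀(x) - a₀(y) ∈ {-1, 0, 1, 2}` is known from `y` and `a₀(x) mod 4`.

Moreover `a₁(x) = a₁(y) + G + s · R(d)`, where `R(d)` counts the occurrences in `y` starting at or
after `d`, and `G` sums the positions of the destroyed occurrences minus those of the created ones.
If `k ≠ 0`, then `G` is `k · d` up to `2t`, while `s · R(d)` decreases in `d` with slope between
`-1/2` and `0`; if `k = 0`, then `-s < G < 2s`. Suppose that two words with equal syndromes give the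
same `y` by deletions at `d₁ ≤ d₂`, the second word is dense, and the two deleted blocks do not fit
in an interval of length `3δ`. Density gives `R(d₁) - R(d₂) ≥ 3` and, two occurrences being
disjoint, `4t ≤ δ + 1`; hence `d₂ - d₁` is so large that the two values of `a₁` are different for
every `k`. They also differ by less than `2n`, hence differ modulo `2n`, a contradiction. Therefore
the interval of length `3δ`, cut off at `n`, that starts at the least position compatible with the
data contains the block deleted from any dense word compatible with them.
-/

/-- The pattern `p = 0^t 1^t`: `t` zeros followed by `t` ones. -/
def pat (t : ℕ) : List ℕ := List.replicate t 0 ++ List.replicate t 1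

/-- The set of (0-indexed) positions at which the pattern `p = 0^t 1^t`
occurs in `x`. -/
def patOcc (t : ℕ) (x : List ℕ) : Finset ℕ :=
  (Finset.range x.length).filter (fun i => (x.drop i).take (2 * t) = pat t)

/-- `a_0(x) = Σ_i 1_p(x)_i`. -/
def a0 (t : ℕ) (x : List ℕ) : ℕ := (patOcc t x).card

/-- `a_1(x) = Σ_i i·1_p(x)_i` (1-indexed positions, so an occurrence at
0-indexed position `i` contributes `i + 1`). -/
def a1 (t : ℕ) (x : List ℕ) : ℕ := ∑ i ∈ patOcc t x, (i + 1)

/-- `x` is `(p,δ)`-dense: every substring of `x` of length `δ` contains an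
occurrence of `p = 0^t 1^t`. -/
def pdense (t δ : ℕ) (x : List ℕ) : Prop :=
  ∀ a, a + δ ≤ x.length →
    ∃ i, a ≤ i ∧ i + 2 * t ≤ a + δ ∧ (x.drop i).take (2 * t) = pat t

section Occurrences

variable {t i : ℕ} {x : List ℕ}

/-- The pattern `0^t 1^t` occurs in `x` at the 0-indexed position `i`, stated symbol by symbol. -/
def OccursAt (t : ℕ) (x : List ℕ) (i : ℕ) : Prop :=
  ∀ k < 2 * t, x[i + k]? = some (if k < t then 0 else 1)

lemma getElem?_pat (t k : ℕ) :
    (pat t)[k]? = if k < 2 * t then some (if k < t then 0 else 1) else none := by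
  simp only [pat, List.getElem?_append, List.getElem?_replicate, List.length_replicate]
  split_ifs <;> first | rfl | omega

lemma take_drop_eq_pat_iff : (x.drop i).take (2 * t) = pat t ↔ OccursAt t x i := by
  simp only [List.ext_getElem?_iff, List.getElem?_take, List.getElem?_drop, getElem?_pat]
  refine forall_congr' fun k => ?_
  split_ifs with hk <;> simp [hk]

lemma mem_patOcc (ht : 1 ≤ t) : i ∈ patOcc t x ↔ OccursAt t x i := by
  rw [patOcc, Finset.mem_filter, Finset.mem_range, take_drop_eq_pat_iff, and_iff_right_iff_imp]
  intro h
  exact (List.getElem?_eq_some_iff.1 (h 0 (by omega))).1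

lemma OccursAt.getElem? (h : OccursAt t x i) {u : ℕ} (hu : i ≤ u ∧ u < i + 2 * t) :
    x[u]? = some (if u < i + t then 0 else 1) := by
  obtain ⟨k, rfl⟩ := Nat.exists_eq_add_of_le hu.1
  simpa using h k (by omega)

lemma OccursAt.lt_iff_lt (hi : OccursAt t x i) {y : List ℕ} {j u v : ℕ} (hj : OccursAt t y j)
    (huv : y[u]? = x[v]?) (hu : j ≤ u ∧ u < j + 2 * t) (hv : i ≤ v ∧ v < i + 2 * t) :
    u < j + t ↔ v < i + t := by
  rw [hj.getElem? hu, hi.getElem? hv, Option.some_inj] at huv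
  split_ifs at huv <;> omega

lemma OccursAt.add_le_of_lt {j : ℕ} (hi : OccursAt t x i) (hj : OccursAt t x j) (hij : i < j) :
    i + 2 * t ≤ j := by
  by_contra hoverlap
  have := hi.lt_iff_lt hj (u := max j (i + t)) rfl (by omega) (by omega)
  omega

lemma card_mul_le_of_separated {S : Finset ℕ} {a b w : ℕ} (hS : ∀ i ∈ S, a ≤ i ∧ i < b)
    (hsep : ∀ i ∈ S, ∀ j ∈ S, i < j → i + w ≤ j) : S.card * w ≤ b + w - 1 - a := by
  have hdisj : (S : Set ℕ).PairwiseDisjoint fun i => Finset.Ico i (i + w) := by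
    intro i hi j hj hne
    refine Finset.disjoint_left.2 fun u hui huj => ?_
    rw [Finset.mem_Ico] at hui huj
    rcases hne.lt_or_gt with hlt | hlt
    · have := hsep i hi j hj hlt
      omega
    · have := hsep j hj i hi hlt
      omega
  calc S.card * w = (S.biUnion fun i => Finset.Ico i (i + w)).card := by
        simp [Finset.card_biUnion hdisj]
    _ ≤ (Finset.Ico a (b + w - 1)).card := by
        refine Finset.card_le_card (Finset.biUnion_subset.2 fun i hi => ?_)
        have := hS i hi
        exact Finset.Ico_subset_Ico (by omega) (by omega)
    _ = b + w - 1 - a := Nat.card_Ico _ _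

lemma card_mul_le_of_subset_patOcc (ht : 1 ≤ t) {S : Finset ℕ} {a b : ℕ}
    (hSx : S ⊆ patOcc t x) (hS : ∀ i ∈ S, a ≤ i ∧ i < b) :
    S.card * (2 * t) ≤ b + 2 * t - 1 - a :=
  card_mul_le_of_separated hS fun _ hi _ hj =>
    ((mem_patOcc ht).1 (hSx hi)).add_le_of_lt ((mem_patOcc ht).1 (hSx hj))

end Occurrences

section Density

variable {t δ : ℕ} {x : List ℕ}

lemma pdense.exists_occursAt (h : pdense t δ x) {a : ℕ} (ha : a + δ ≤ x.length) :
    ∃ i, a ≤ i ∧ i + 2 * t ≤ a + δ ∧ OccursAt t x i := by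
  simpa only [take_drop_eq_pat_iff] using h a ha

lemma pdense.four_mul_le (h : pdense t δ x) (hδ : 2 * δ < x.length) : 4 * t ≤ δ + 1 := by
  obtain ⟨i, -, hi, hxi⟩ := h.exists_occursAt (a := 0) (by omega)
  obtain ⟨j, hij, hj, hxj⟩ := h.exists_occursAt (a := i + 1) (by omega)
  have := hxi.add_le_of_lt hxj hij
  omega

lemma pdense.exists_three_occursAt (h : pdense t δ x) {a b : ℕ} (hb : b ≤ x.length)
    (ha : a + δ ≤ b) (hab : a + 3 * δ + 2 ≤ b + 4 * t) :
    ∃ i j k, a ≤ i ∧ i < j ∧ j < k ∧ k + 2 * t ≤ b ∧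
      OccursAt t x i ∧ OccursAt t x j ∧ OccursAt t x k := by
  obtain ⟨i, hai, hi, hxi⟩ := h.exists_occursAt (a := a) (by omega)
  obtain ⟨j, hij, hj, hxj⟩ := h.exists_occursAt (a := i + 1) (by omega)
  obtain ⟨k, hjk, hk, hxk⟩ := h.exists_occursAt (a := j + 1) (by omega)
  exact ⟨i, j, k, hai, hij, hjk, by omega, hxi, hxj, hxk⟩

end Density

section Deletion

/-- The word obtained from `x` by deleting the `s` symbols at the 0-indexed positions
`d, …, d + s - 1`; the elements of `burst s x` are the words `deleteBlock s d x`. -/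
def deleteBlock {α : Type*} (s d : ℕ) (x : List α) : List α :=
  x.take d ++ x.drop (d + s)

lemma getElem?_deleteBlock {α : Type*} (s d : ℕ) (x : List α) (u : ℕ) :
    (deleteBlock s d x)[u]? = if u < d then x[u]? else x[u + s]? := by
  grind [deleteBlock]

variable {s t d i j : ℕ} {x : List ℕ}

lemma occursAt_deleteBlock_of_add_le (h : i + 2 * t ≤ d) :
    OccursAt t (deleteBlock s d x) i ↔ OccursAt t x i := by
  refine forall₂_congr fun k hk => ?_
  rw [getElem?_deleteBlock, if_pos (by omega)]

lemma occursAt_deleteBlock_of_le (h : d ≤ i) :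
    OccursAt t (deleteBlock s d x) i ↔ OccursAt t x (i + s) := by
  refine forall₂_congr fun k _ => ?_
  rw [getElem?_deleteBlock, if_neg (by omega), add_right_comm]

lemma OccursAt.lt_iff_lt_left (hi : OccursAt t x i) (hj : OccursAt t (deleteBlock s d x) j)
    {u : ℕ} (hud : u < d) (hu : j ≤ u ∧ u < j + 2 * t) (hv : i ≤ u ∧ u < i + 2 * t) :
    u < j + t ↔ u < i + t :=
  hi.lt_iff_lt hj (by rw [getElem?_deleteBlock, if_pos hud]) hu hv

lemma OccursAt.lt_iff_lt_right (hi : OccursAt t x i) (hj : OccursAt t (deleteBlock s d x) j)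
    {u : ℕ} (hud : d ≤ u) (hu : j ≤ u ∧ u < j + 2 * t) (hv : i ≤ u + s ∧ u + s < i + 2 * t) :
    u < j + t ↔ u + s < i + t :=
  hi.lt_iff_lt hj (by rw [getElem?_deleteBlock, if_neg hud.not_gt]) hu hv

/-- The occurrences in `x` that the block of `s` symbols at `d` meets or, if `s = 0`, that the cut
between the positions `d - 1` and `d` splits. Deleting the block destroys `straddling t s d x` and
creates `straddling t 0 d (deleteBlock s d x)`. -/
def straddling (t s d : ℕ) (x : List ℕ) : Finset ℕ :=
  (patOcc t x).filter fun i => d < i + 2 * t ∧ i < d + s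

lemma mem_straddling (ht : 1 ≤ t) :
    i ∈ straddling t s d x ↔ OccursAt t x i ∧ d < i + 2 * t ∧ i < d + s := by
  rw [straddling, Finset.mem_filter, mem_patOcc ht]

lemma created_lt_destroyed_add (hs : 1 ≤ s) (hst : s ≤ t) (hi : OccursAt t x i)
    (hj : OccursAt t (deleteBlock s d x) j) (hid : d < i + 2 * t) (hjd : j < d) :
    j < i + s := by
  by_contra hij
  -- a kept symbol would be a `0` of the created and a `1` of the destroyed occurrence
  by_cases hcut : i + t < d
  · have := hi.lt_iff_lt_left hj (u := max j (i + t)) (by omega) (by omega) (by omega)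
    omega
  · have := hi.lt_iff_lt_right hj (u := max d (i + t - s)) (by omega) (by omega) (by omega)
    omega

lemma destroyed_lt_created_add (hs : 1 ≤ s) (hst : s ≤ t) (hi : OccursAt t x i)
    (hj : OccursAt t (deleteBlock s d x) j) (hid : i < d + s) (hjd : d < j + 2 * t) :
    i < j + 2 * s := by
  by_contra hij
  -- a kept symbol would be a `1` of the created and a `0` of the destroyed occurrence
  by_cases hcut : max (j + t) i < d
  · have := hi.lt_iff_lt_left hj (u := max (j + t) i) hcut (by omega) (by omega)
    omega
  · have := hi.lt_iff_lt_right hj (u := max d (j + t)) (by omega) (by omega) (by omega)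
    omega

lemma not_created_of_two_destroyed (hst : s ≤ t) {i' : ℕ} (hi : OccursAt t x i)
    (hi' : OccursAt t x i') (hlt : i < i') (hid : d < i + 2 * t) (hid' : i' < d + s)
    (hj : OccursAt t (deleteBlock s d x) j) (hjd : d < j + 2 * t) : d ≤ j := by
  by_contra hdj
  have hdisj := hi.add_le_of_lt hi' hlt
  -- the created occurrence would have a `1` just before the cut and a `0` just after it
  have hleft := hi.lt_iff_lt_left hj (u := d - 1) (by omega) (by omega) (by omega)
  have hright := hi'.lt_iff_lt_right hj (u := d) le_rfl (by omega) (by omega)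
  omega

lemma card_straddling_mul_le (ht : 1 ≤ t) :
    (straddling t s d x).card * (2 * t) ≤ 4 * t + s - 2 := by
  have hwindow : ∀ i ∈ straddling t s d x, d + 1 - 2 * t ≤ i ∧ i < d + s := fun i hi => by
    have := (mem_straddling ht).1 hi
    omega
  calc (straddling t s d x).card * (2 * t) ≤ d + s + 2 * t - 1 - (d + 1 - 2 * t) :=
        card_mul_le_of_subset_patOcc ht (Finset.filter_subset _ _) hwindow
    _ ≤ 4 * t + s - 2 := by omega

lemma card_straddling_le_two (ht : 1 ≤ t) (hst : s ≤ t) : (straddling t s d x).card ≤ 2 := by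
  by_contra! hcard
  have := Nat.mul_le_mul_right (2 * t) hcard
  have := card_straddling_mul_le (s := s) (d := d) (x := x) ht
  omega

lemma card_straddling_zero_le_one (ht : 1 ≤ t) : (straddling t 0 d x).card ≤ 1 := by
  by_contra! hcard
  have := Nat.mul_le_mul_right (2 * t) hcard
  have := card_straddling_mul_le (s := 0) (d := d) (x := x) ht
  omega

lemma exists_pair_of_card_straddling_eq_two (ht : 1 ≤ t) (h : (straddling t s d x).card = 2) :
    ∃ i i', i + 2 * t ≤ i' ∧ straddling t s d x = {i, i'} := by
  obtain ⟨i, i', hne, heq⟩ := Finset.card_eq_two.1 h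
  have hi : i ∈ straddling t s d x := by simp [heq]
  have hi' : i' ∈ straddling t s d x := by simp [heq]
  have hxi := ((mem_straddling ht).1 hi).1
  have hxi' := ((mem_straddling ht).1 hi').1
  rcases hne.lt_or_gt with hlt | hlt
  · exact ⟨i, i', hxi.add_le_of_lt hxi' hlt, heq⟩
  · exact ⟨i', i, hxi'.add_le_of_lt hxi hlt, heq.trans (Finset.pair_comm i i')⟩

lemma straddling_zero_deleteBlock_eq_empty (hs : 1 ≤ s) (hst : s ≤ t) {i' : ℕ} (hii' : i < i')
    (hi : i ∈ straddling t s d x) (hi' : i' ∈ straddling t s d x) :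
    straddling t 0 d (deleteBlock s d x) = ∅ := by
  have ht := hs.trans hst
  rw [mem_straddling ht] at hi hi'
  refine Finset.eq_empty_of_forall_notMem fun j hj => ?_
  obtain ⟨hyj, hdj, hjd⟩ := (mem_straddling ht).1 hj
  exact hjd.not_ge (not_created_of_two_destroyed hst hi.1 hi'.1 hii' hi.2.1 hi'.2.2 hyj hdj)

lemma straddling_cases (hs : 1 ≤ s) (hst : s ≤ t) (d : ℕ) (x : List ℕ) :
    (straddling t s d x = ∅ ∧ straddling t 0 d (deleteBlock s d x) = ∅) ∨
      (∃ j, straddling t s d x = ∅ ∧ straddling t 0 d (deleteBlock s d x) = {j}) ∨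
      (∃ i, straddling t s d x = {i} ∧ straddling t 0 d (deleteBlock s d x) = ∅) ∨
      (∃ i j, straddling t s d x = {i} ∧ straddling t 0 d (deleteBlock s d x) = {j} ∧
        j < i + s ∧ i < j + 2 * s) ∨
      ∃ i i', straddling t s d x = {i, i'} ∧ straddling t 0 d (deleteBlock s d x) = ∅ ∧
        i + 2 * t ≤ i' := by
  have ht := hs.trans hst
  have hcreated : straddling t 0 d (deleteBlock s d x) = ∅ ∨
      ∃ j, straddling t 0 d (deleteBlock s d x) = {j} := by
    rw [← Finset.card_eq_one, ← Finset.card_eq_zero, ← Nat.le_one_iff_eq_zero_or_eq_one]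
    exact card_straddling_zero_le_one ht
  rcases (card_straddling_le_two (d := d) (x := x) ht hst).eq_or_lt with htwo | hlt
  · obtain ⟨i, i', hii', hD⟩ := exists_pair_of_card_straddling_eq_two ht htwo
    have hi : i ∈ straddling t s d x := by simp [hD]
    have hi' : i' ∈ straddling t s d x := by simp [hD]
    have hC := straddling_zero_deleteBlock_eq_empty hs hst (by omega) hi hi'
    exact .inr (.inr (.inr (.inr ⟨i, i', hD, hC, hii'⟩)))
  rcases Nat.le_one_iff_eq_zero_or_eq_one.1 (Nat.le_of_lt_succ hlt) with hzero | hone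
  · have hD := Finset.card_eq_zero.1 hzero
    rcases hcreated with hC | ⟨j, hC⟩
    · exact .inl ⟨hD, hC⟩
    · exact .inr (.inl ⟨j, hD, hC⟩)
  · obtain ⟨i, hD⟩ := Finset.card_eq_one.1 hone
    rcases hcreated with hC | ⟨j, hC⟩
    · exact .inr (.inr (.inl ⟨i, hD, hC⟩))
    · obtain ⟨hxi, hdi, hid⟩ := (mem_straddling ht).1 (hD ▸ Finset.mem_singleton_self i)
      obtain ⟨hyj, hdj, hjd⟩ := (mem_straddling ht).1 (hC ▸ Finset.mem_singleton_self j)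
      exact .inr (.inr (.inr (.inl ⟨i, j, hD, hC, created_lt_destroyed_add hs hst hxi hyj hdi hjd,
        destroyed_lt_created_add hs hst hxi hyj hid hdj⟩)))

end Deletion

section Syndromes

variable {s t d : ℕ} {x : List ℕ}

/-- The part of `a₁(x) - a₁(deleteBlock s d x)` due to the occurrences destroyed and created: the
sum of the 1-indexed positions of the former minus that of the latter. -/
def gain (t s d : ℕ) (x : List ℕ) : ℤ :=
  ∑ i ∈ straddling t s d x, ((i : ℤ) + 1)
    - ∑ j ∈ straddling t 0 d (deleteBlock s d x), ((j : ℤ) + 1)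

lemma sum_patOcc_eq_add_straddling_add {M : Type*} [AddCommMonoid M] (ht : 1 ≤ t) (s d : ℕ)
    (x : List ℕ) (f : ℕ → M) :
    ∑ i ∈ patOcc t x, f i = ∑ i ∈ patOcc t x with i + 2 * t ≤ d, f i
      + ∑ i ∈ straddling t s d x, f i + ∑ i ∈ patOcc t x with d + s ≤ i, f i := by
  simp only [straddling, Finset.sum_filter, ← Finset.sum_add_distrib]
  refine Finset.sum_congr rfl fun i _ => ?_
  split_ifs <;> first | omega | simp

lemma filter_patOcc_deleteBlock_of_add_le (ht : 1 ≤ t) (s d : ℕ) (x : List ℕ) :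
    (patOcc t (deleteBlock s d x)).filter (fun i => i + 2 * t ≤ d)
      = (patOcc t x).filter fun i => i + 2 * t ≤ d := by
  ext i
  simp only [Finset.mem_filter, mem_patOcc ht, and_congr_left_iff]
  exact occursAt_deleteBlock_of_add_le

lemma filter_patOcc_of_le_eq_map (ht : 1 ≤ t) (s d : ℕ) (x : List ℕ) :
    (patOcc t x).filter (fun i => d + s ≤ i)
      = ((patOcc t (deleteBlock s d x)).filter (d ≤ ·)).map (addRightEmbedding s) := by
  ext i
  simp only [Finset.mem_map, Finset.mem_filter, mem_patOcc ht, addRightEmbedding_apply]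
  constructor
  · rintro ⟨hxi, hi⟩
    obtain ⟨k, rfl⟩ := Nat.exists_eq_add_of_le' (show s ≤ i by omega)
    exact ⟨k, ⟨(occursAt_deleteBlock_of_le (by omega)).2 hxi, by omega⟩, rfl⟩
  · rintro ⟨k, ⟨hyk, hk⟩, rfl⟩
    exact ⟨(occursAt_deleteBlock_of_le hk).1 hyk, by omega⟩

lemma sum_patOcc_sub_sum_patOcc_deleteBlock {M : Type*} [AddCommGroup M] (ht : 1 ≤ t) (s d : ℕ)
    (x : List ℕ) (f : ℕ → M) :
    ∑ i ∈ patOcc t x, f i - ∑ i ∈ patOcc t (deleteBlock s d x), f i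
      = ∑ i ∈ straddling t s d x, f i - ∑ j ∈ straddling t 0 d (deleteBlock s d x), f j
        + ∑ i ∈ patOcc t (deleteBlock s d x) with d ≤ i, (f (i + s) - f i) := by
  rw [sum_patOcc_eq_add_straddling_add ht s d x,
    sum_patOcc_eq_add_straddling_add ht 0 d (deleteBlock s d x),
    filter_patOcc_deleteBlock_of_add_le ht, filter_patOcc_of_le_eq_map ht, Finset.sum_map,
    Finset.sum_sub_distrib]
  simp only [addRightEmbedding_apply, add_zero]
  abel

lemma a0_sub_a0_deleteBlock (ht : 1 ≤ t) (s d : ℕ) (x : List ℕ) :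
    (a0 t x : ℤ) - a0 t (deleteBlock s d x)
      = (straddling t s d x).card - (straddling t 0 d (deleteBlock s d x)).card := by
  simpa [a0] using sum_patOcc_sub_sum_patOcc_deleteBlock ht s d x fun _ => (1 : ℤ)

lemma a1_sub_a1_deleteBlock (ht : 1 ≤ t) (s d : ℕ) (x : List ℕ) :
    (a1 t x : ℤ) - a1 t (deleteBlock s d x)
      = gain t s d x + s * ((patOcc t (deleteBlock s d x)).filter (d ≤ ·)).card := by
  have h := sum_patOcc_sub_sum_patOcc_deleteBlock ht s d x fun i => (i : ℤ) + 1
  simpa [a1, gain, mul_comm] using h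

/-- For a positive change of `a₀`, the bounds `0 < gain` and `gain ≤ d + s`, `gain ≤ 2 * d` serve to
keep the values of `a₁` for two different `d` less than `2n` apart. -/
lemma a0_sub_and_gain_cases (hs : 1 ≤ s) (hst : s ≤ t) (d : ℕ) (x : List ℕ) :
    ((a0 t x : ℤ) - a0 t (deleteBlock s d x) = -1 ∧
        -(d : ℤ) ≤ gain t s d x ∧ gain t s d x < 2 * t - d) ∨
      ((a0 t x : ℤ) - a0 t (deleteBlock s d x) = 0 ∧
        -(s : ℤ) < gain t s d x ∧ gain t s d x < 2 * s) ∨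
      ((a0 t x : ℤ) - a0 t (deleteBlock s d x) = 1 ∧
        0 < gain t s d x ∧ d - 2 * t < gain t s d x ∧ gain t s d x ≤ d + s) ∨
      ((a0 t x : ℤ) - a0 t (deleteBlock s d x) = 2 ∧
        0 < gain t s d x ∧ 2 * d - 2 * t < gain t s d x ∧ gain t s d x ≤ 2 * d) := by
  have ht := hs.trans hst
  have hwinD : ∀ i ∈ straddling t s d x, d < i + 2 * t ∧ i < d + s :=
    fun i hi => ((mem_straddling ht).1 hi).2
  have hwinC : ∀ j ∈ straddling t 0 d (deleteBlock s d x), d < j + 2 * t ∧ j < d :=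
    fun j hj => ((mem_straddling ht).1 hj).2
  rw [a0_sub_a0_deleteBlock ht, gain]
  rcases straddling_cases hs hst d x with ⟨hD, hC⟩ | ⟨j, hD, hC⟩ | ⟨i, hD, hC⟩ |
    ⟨i, j, hD, hC, hji, hij⟩ | ⟨i, i', hD, hC, hii'⟩
  · simp only [hD, hC, Finset.sum_empty, Finset.card_empty]
    omega
  · have hj := hwinC j (by simp [hC])
    simp only [hD, hC, Finset.sum_empty, Finset.sum_singleton, Finset.card_empty,
      Finset.card_singleton]
    omega
  · have hi := hwinD i (by simp [hD])
    simp only [hD, hC, Finset.sum_empty, Finset.sum_singleton, Finset.card_empty,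
      Finset.card_singleton]
    omega
  · simp only [hD, hC, Finset.sum_singleton, Finset.card_singleton]
    omega
  · have hi := hwinD i (by simp [hD])
    have hi' := hwinD i' (by simp [hD])
    have hne : i ≠ i' := by omega
    simp only [hD, hC, Finset.sum_pair hne, Finset.card_pair hne, Finset.sum_empty,
      Finset.card_empty]
    omega

variable {δ d₁ d₂ : ℕ} {x₁ x₂ : List ℕ}

lemma three_le_card_patOcc_deleteBlock (hst : s ≤ t) (ht : 1 ≤ t) (hx : pdense t δ x)
    (hδ : 4 * t ≤ δ + 1) (hd : d + s ≤ x.length) {a : ℕ} (hfar : a + 3 * δ < d + s) :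
    3 ≤ ((patOcc t (deleteBlock s d x)).filter fun i => a ≤ i ∧ i < d).card := by
  obtain ⟨i, j, k, hai, hij, hjk, hkd, hxi, hxj, hxk⟩ :=
    hx.exists_three_occursAt (a := a) (b := d) (by omega) (by omega) (by omega)
  rw [← Finset.card_eq_three.2 ⟨i, j, k, hij.ne, (hij.trans hjk).ne, hjk.ne, rfl⟩]
  refine Finset.card_le_card fun l hl => ?_
  simp only [Finset.mem_insert, Finset.mem_singleton] at hl
  rw [Finset.mem_filter, mem_patOcc ht, occursAt_deleteBlock_of_add_le (by omega)]
  rcases hl with rfl | rfl | rfl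
  · exact ⟨hxi, by omega⟩
  · exact ⟨hxj, by omega⟩
  · exact ⟨hxk, by omega⟩

lemma two_mul_mul_card_lt (hst : s ≤ t) (ht : 1 ≤ t) (a b : ℕ) (y : List ℕ) :
    2 * (s * ((patOcc t y).filter fun i => a ≤ i ∧ i < b).card) < b - a + 2 * t := by
  set S := (patOcc t y).filter fun i => a ≤ i ∧ i < b
  have hS : ∀ i ∈ S, a ≤ i ∧ i < b := fun i hi => (Finset.mem_filter.1 hi).2
  calc 2 * (s * S.card) ≤ 2 * (t * S.card) := by gcongr
    _ = S.card * (2 * t) := by ring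
    _ ≤ b + 2 * t - 1 - a := card_mul_le_of_subset_patOcc ht (Finset.filter_subset _ _) hS
    _ < b - a + 2 * t := by omega

lemma card_filter_le_eq_add (S : Finset ℕ) (h : d₁ ≤ d₂) :
    (S.filter (d₁ ≤ ·)).card
      = (S.filter fun i => d₁ ≤ i ∧ i < d₂).card + (S.filter (d₂ ≤ ·)).card := by
  simp only [Finset.card_filter, ← Finset.sum_add_distrib]
  refine Finset.sum_congr rfl fun i _ => ?_
  split_ifs <;> omega

lemma a1_sub_a1_eq (ht : 1 ≤ t) (hle : d₁ ≤ d₂) (hy : deleteBlock s d₁ x₁ = deleteBlock s d₂ x₂) :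
    (a1 t x₁ : ℤ) - a1 t x₂ = gain t s d₁ x₁ - gain t s d₂ x₂
      + s * ((patOcc t (deleteBlock s d₂ x₂)).filter fun i => d₁ ≤ i ∧ i < d₂).card := by
  have h₁ := a1_sub_a1_deleteBlock ht s d₁ x₁
  have h₂ := a1_sub_a1_deleteBlock ht s d₂ x₂
  rw [hy, card_filter_le_eq_add _ hle] at h₁
  push_cast at h₁
  linear_combination h₁ - h₂

lemma a0_eq_of_modEq_four (hs : 1 ≤ s) (hst : s ≤ t)
    (hy : deleteBlock s d₁ x₁ = deleteBlock s d₂ x₂) (h0 : a0 t x₁ ≡ a0 t x₂ [MOD 4]) :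
    a0 t x₁ = a0 t x₂ := by
  have hcases₁ := a0_sub_and_gain_cases hs hst d₁ x₁
  have hcases₂ := a0_sub_and_gain_cases hs hst d₂ x₂
  rw [hy] at hcases₁
  unfold Nat.ModEq at h0
  omega

lemma gain_sub_gain_add_ne_zero_and_abs_lt (hs : 1 ≤ s) (hst : s ≤ t)
    (hy : deleteBlock s d₁ x₁ = deleteBlock s d₂ x₂) (h0 : a0 t x₁ = a0 t x₂)
    (hfar : d₁ + 12 * t ≤ d₂ + s + 2) {K n : ℕ} (hd₂ : d₂ + s ≤ n) (hK : 3 * s ≤ K)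
    (hK' : 2 * K < d₂ - d₁ + 2 * t) :
    gain t s d₁ x₁ - gain t s d₂ x₂ + K ≠ 0 ∧
      |gain t s d₁ x₁ - gain t s d₂ x₂ + K| < 2 * n := by
  have hcases₁ := a0_sub_and_gain_cases hs hst d₁ x₁
  have hcases₂ := a0_sub_and_gain_cases hs hst d₂ x₂
  rw [hy, h0] at hcases₁
  rw [abs_lt]
  rcases hcases₁ with h₁ | h₁ | h₁ | h₁ <;> rcases hcases₂ with h₂ | h₂ | h₂ | h₂ <;> omega

lemma add_le_add_three_mul_of_deleteBlock_eq (hs : 1 ≤ s) (hst : s ≤ t)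
    (hx₂ : pdense t δ x₂) (hd₂ : d₂ + s ≤ x₂.length) (hle : d₁ ≤ d₂)
    (hy : deleteBlock s d₁ x₁ = deleteBlock s d₂ x₂) (h0 : a0 t x₁ ≡ a0 t x₂ [MOD 4])
    (h1 : a1 t x₁ ≡ a1 t x₂ [MOD 2 * x₂.length]) :
    d₂ + s ≤ d₁ + 3 * δ := by
  by_contra! hfar
  have ht := hs.trans hst
  have hδ := hx₂.four_mul_le (by omega)
  set M := (patOcc t (deleteBlock s d₂ x₂)).filter fun i => d₁ ≤ i ∧ i < d₂
  have hmany : 3 ≤ M.card := three_le_card_patOcc_deleteBlock hst ht hx₂ hδ hd₂ hfar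
  have hfew : 2 * (s * M.card) < d₂ - d₁ + 2 * t := two_mul_mul_card_lt hst ht d₁ d₂ _
  have hdiff : (a1 t x₁ : ℤ) - a1 t x₂ = gain t s d₁ x₁ - gain t s d₂ x₂ + (s * M.card : ℕ) := by
    exact_mod_cast a1_sub_a1_eq ht hle hy
  have hdvd : (2 * x₂.length : ℤ) ∣ a1 t x₁ - a1 t x₂ := by exact_mod_cast h1.symm.dvd
  have hsM : 3 * s ≤ s * M.card := mul_comm 3 s ▸ Nat.mul_le_mul_left s hmany
  obtain ⟨hne, hlt⟩ := gain_sub_gain_add_ne_zero_and_abs_lt hs hst hy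
    (a0_eq_of_modEq_four hs hst hy h0) (by omega) hd₂ hsM hfew
  rw [← hdiff] at hne hlt
  exact hne (Int.eq_zero_of_abs_lt_dvd hdvd hlt)

end Syndromes

/-- The positions `d` such that `y` arises by deleting the block of `s` symbols at `d` from a word
of length `n` whose syndromes `a₀ mod 4` and `a₁ mod 2n` are `r₀` and `r₁`. -/
def compatiblePositions (t s n r₀ r₁ : ℕ) (y : List ℕ) : Set ℕ :=
  {d | ∃ x : List ℕ, x.length = n ∧ a0 t x % 4 = r₀ ∧ a1 t x % (2 * n) = r₁ ∧
    deleteBlock s d x = y}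

theorem locate_burst_from_syndromes_general (n δ : ℕ) {t s : ℕ} (hs : 1 ≤ s) (hst : s ≤ t) :
    ∃ Loc : ℕ → ℕ → List ℕ → ℕ × ℕ,
      (∀ r₀ r₁ y, (Loc r₀ r₁ y).2 ≤ n ∧ (Loc r₀ r₁ y).2 - (Loc r₀ r₁ y).1 ≤ 3 * δ) ∧
      ∀ (x : List ℕ) (d : ℕ), x.length = n → pdense t δ x → d + s ≤ n →
        (Loc (a0 t x % 4) (a1 t x % (2 * n)) (deleteBlock s d x)).1 ≤ d ∧
        d + s ≤ (Loc (a0 t x % 4) (a1 t x % (2 * n)) (deleteBlock s d x)).2 := by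
  refine ⟨fun r₀ r₁ y => (sInf (compatiblePositions t s n r₀ r₁ y),
    min (sInf (compatiblePositions t s n r₀ r₁ y) + 3 * δ) n),
    fun r₀ r₁ y => ⟨min_le_right _ _, Nat.sub_le_iff_le_add'.2 (min_le_left _ _)⟩, ?_⟩
  rintro x d rfl hdense hd
  have hmem : d ∈ compatiblePositions t s x.length (a0 t x % 4) (a1 t x % (2 * x.length))
      (deleteBlock s d x) := ⟨x, rfl, rfl, rfl, rfl⟩
  have hle := Nat.sInf_le hmem
  obtain ⟨x', -, h0, h1, hy⟩ := Nat.sInf_mem ⟨d, hmem⟩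
  exact ⟨hle, le_min (add_le_add_three_mul_of_deleteBlock_eq hs hst hdense hd hle hy h0 h1) hd⟩

/-- Lemma 3: let `δ = 2t·q^{2t}·⌈log₂ n⌉` and `1 ≤ t' ≤ t`.
There is a function `Loc` which, from `a_0(x) mod 4`, `a_1(x) mod 2n` and
`y ∈ B_{t'}(x)` alone, outputs a (half-open, 0-indexed) interval
`[a, b) ⊆ [0, n)` of length at most `3δ` containing the deletion burst:
there is `d` with `a ≤ d`, `d + t' ≤ b` and `y = x_{[1,n] ∖ [d+1, d+t']}`,
provided `x ∈ Σ_q^n` is `(p,δ)`-dense. -/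
theorem locate_burst_from_syndromes
    (q t n : ℕ) (hq : 2 ≤ q) (ht : 1 ≤ t) (hn : 1 ≤ n)
    (δ : ℕ) (hδ : δ = 2 * t * q ^ (2 * t) * Nat.clog 2 n)
    (t' : ℕ) (ht1 : 1 ≤ t') (ht2 : t' ≤ t) :
    ∃ Loc : ℕ → ℕ → List ℕ → ℕ × ℕ,
      ∀ x y : List ℕ, x.length = n → (∀ a ∈ x, a < q) → pdense t δ x →
        y ∈ burst t' x →
        ∃ a b : ℕ, Loc (a0 t x % 4) (a1 t x % (2 * n)) y = (a, b) ∧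
          b ≤ n ∧ b - a ≤ 3 * δ ∧
          ∃ d, a ≤ d ∧ d + t' ≤ b ∧ y = x.take d ++ x.drop (d + t') := by
  obtain ⟨Loc, hLoc, hmem⟩ := locate_burst_from_syndromes_general n δ ht1 ht2
  refine ⟨Loc, ?_⟩
  rintro x _ hx - hdense ⟨d, hd, rfl⟩
  obtain ⟨had, hdb⟩ := hmem x d hx hdense (hx ▸ hd)
  exact ⟨_, _, rfl, (hLoc _ _ _).1, (hLoc _ _ _).2, d, had, hdb, rfl⟩
end

section
/- Let q ≥ 2, t ≥ 1, δ = 2t·q^{2t}·⌈log_2 n⌉, and suppose n ≥ q^{(6t+3−log_q e)/0.4}. Let S ⊆ Σ_q^δ be the set of all strings of length δ that contain no occurrence of the pattern p = 0^t1^t. Then |S| ≤ q^{δ − ⌈log_q n⌉ − 6t − 2}; equivalently, there exists an injective function g : S → Σ_q^{δ − ⌈log_q n⌉ − 6t − 2}. -/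
section Words

variable {α : Type*} {A : Set α} {w x : List α} {m : ℕ}

/-- The strings of length `m` over the alphabet `A`. For the alphabet `Σ_q` of the theorem, take
`A = Set.Iio q`. -/
def words (A : Set α) (m : ℕ) : Set (List α) := {x | x.length = m ∧ ∀ a ∈ x, a ∈ A}

/-- The strings of length `m` over the alphabet `A` in which `w` does not occur as a contiguous
factor. -/
def avoiding (A : Set α) (w : List α) (m : ℕ) : Set (List α) := {x ∈ words A m | ¬ w <:+: x}

lemma words_eq_image_map_val (A : Set α) (m : ℕ) :
    words A m = List.map ((↑) : A → α) '' {l | l.length = m} := by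
  ext x
  constructor
  · rintro ⟨hlen, hx⟩
    obtain ⟨l, rfl⟩ : x ∈ Set.range (List.map ((↑) : A → α)) := by
      rwa [Set.range_list_map_coe]
    exact ⟨l, (List.length_map _).symm.trans hlen, rfl⟩
  · rintro ⟨l, hl, rfl⟩
    refine ⟨(List.length_map _).trans hl, ?_⟩
    simp only [List.mem_map]
    rintro _ ⟨a, -, rfl⟩
    exact a.2

lemma finite_words (hA : A.Finite) (m : ℕ) : (words A m).Finite := by
  have := hA.to_subtype
  rw [words_eq_image_map_val]
  exact (List.finite_length_eq A m).image _

lemma ncard_words (hA : A.Finite) (m : ℕ) : (words A m).ncard = A.ncard ^ m := by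
  have := hA.fintype
  rw [words_eq_image_map_val, Set.ncard_image_of_injective _ Subtype.val_injective.list_map]
  calc {l : List A | l.length = m}.ncard = Nat.card (List.Vector A m) := rfl
    _ = A.ncard ^ m := by
      rw [Nat.card_eq_fintype_card, card_vector, ← Nat.card_eq_fintype_card, Nat.card_coe_set_eq]

lemma finite_avoiding (hA : A.Finite) (w : List α) (m : ℕ) : (avoiding A w m).Finite :=
  (finite_words hA m).subset (Set.sep_subset _ _)

lemma take_mem_words_sdiff (hx : x ∈ avoiding A w (w.length + m)) :
    x.take w.length ∈ words A w.length \ {w} := by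
  obtain ⟨⟨hlen, hxA⟩, hwx⟩ := hx
  refine ⟨⟨by simp [hlen], fun a ha => hxA a (List.mem_of_mem_take ha)⟩, fun htake => hwx ?_⟩
  rw [← Set.mem_singleton_iff.1 htake]
  exact (List.take_prefix _ _).isInfix

lemma drop_mem_avoiding {k : ℕ} (hx : x ∈ avoiding A w (k + m)) : x.drop k ∈ avoiding A w m := by
  obtain ⟨⟨hlen, hxA⟩, hwx⟩ := hx
  exact ⟨⟨by simp [hlen], fun a ha => hxA a (List.mem_of_mem_drop ha)⟩,
    fun h => hwx (h.trans (List.drop_suffix _ _).isInfix)⟩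

lemma ncard_avoiding_length_add_le (hA : A.Finite) (hw : ∀ a ∈ w, a ∈ A) (m : ℕ) :
    (avoiding A w (w.length + m)).ncard
      ≤ (A.ncard ^ w.length - 1) * (avoiding A w m).ncard := by
  have hfirst : (words A w.length \ {w}).ncard = A.ncard ^ w.length - 1 := by
    have hmem : w ∈ words A w.length := ⟨rfl, hw⟩
    rw [Set.ncard_sdiff_singleton_of_mem hmem, ncard_words hA]
  rw [← hfirst, ← Set.ncard_prod]
  refine Set.ncard_le_ncard_of_injOn (fun x => (x.take w.length, x.drop w.length))
    (fun x hx => ⟨take_mem_words_sdiff hx, drop_mem_avoiding hx⟩) (fun x _ y _ hxy => ?_)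
    ((finite_words hA _).sdiff.prod (finite_avoiding hA w m))
  obtain ⟨htake, hdrop⟩ := Prod.mk.inj hxy
  rw [← List.take_append_drop w.length x, htake, hdrop, List.take_append_drop]

lemma ncard_avoiding_length_mul_le (hA : A.Finite) (hw : ∀ a ∈ w, a ∈ A) (k : ℕ) :
    (avoiding A w (w.length * k)).ncard ≤ (A.ncard ^ w.length - 1) ^ k := by
  induction k with
  | zero =>
    calc (avoiding A w 0).ncard ≤ (words A 0).ncard :=
          Set.ncard_le_ncard (Set.sep_subset _ _) (finite_words hA 0)
      _ = (A.ncard ^ w.length - 1) ^ 0 := by rw [ncard_words hA, pow_zero, pow_zero]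
  | succ k ih =>
    rw [Nat.mul_succ, add_comm, pow_succ']
    exact (ncard_avoiding_length_add_le hA hw _).trans (Nat.mul_le_mul_left _ ih)

lemma infix_iff_exists_take_drop_eq : w <:+: x ↔ ∃ i, (x.drop i).take w.length = w := by
  constructor
  · rintro ⟨u, v, rfl⟩
    exact ⟨u.length, by simp⟩
  · rintro ⟨i, hi⟩
    rw [← hi]
    exact (List.take_prefix _ _).isInfix.trans (List.drop_suffix _ _).isInfix

lemma pat_mem_words {q : ℕ} (hq : 2 ≤ q) (t : ℕ) : pat t ∈ words (Set.Iio q) (2 * t) := by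
  refine ⟨by simp [pat, two_mul], fun a ha => ?_⟩
  simp only [pat, List.mem_append, List.mem_replicate] at ha
  rw [Set.mem_Iio]
  omega

lemma avoiding_Iio_eq (q m : ℕ) (w : List ℕ) :
    avoiding (Set.Iio q) w m = {x | x.length = m ∧ (∀ a ∈ x, a < q) ∧
      ¬∃ i, (x.drop i).take w.length = w} := by
  ext x
  simp only [avoiding, words, infix_iff_exists_take_drop_eq, Set.mem_ofPred_eq, Set.mem_Iio,
    and_assoc]

end Words

lemma sub_one_pow_mul_mul_exp_le {Q : ℕ} (hQ : 1 ≤ Q) (L : ℕ) :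
    ((Q : ℝ) - 1) ^ (Q * L) * Real.exp L ≤ (Q : ℝ) ^ (Q * L) := by
  have hQ' : (1 : ℝ) ≤ Q := by exact_mod_cast hQ
  have hbase : (Q : ℝ) - 1 = Q * (1 - 1 / Q) := by field_simp
  have hone : (0 : ℝ) ≤ 1 - 1 / Q := sub_nonneg.2 ((div_le_one₀ (by positivity)).2 hQ')
  calc ((Q : ℝ) - 1) ^ (Q * L) * Real.exp L
      = (Q : ℝ) ^ (Q * L) * (((1 - 1 / (Q : ℝ)) ^ Q) ^ L * Real.exp L) := by
        rw [hbase, mul_pow, pow_mul (1 - 1 / (Q : ℝ)), mul_assoc]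
    _ ≤ (Q : ℝ) ^ (Q * L) * (Real.exp (-1) ^ L * Real.exp L) := by
        gcongr
        exact Real.one_sub_div_pow_le_exp_neg hQ'
    _ = (Q : ℝ) ^ (Q * L) := by
        rw [← Real.exp_nat_mul, ← Real.exp_add]
        simp

lemma le_pow_sub_of_mul_pow_le_pow {a q m d : ℕ} (hq : 1 ≤ q) (h : a * q ^ m ≤ q ^ d) :
    a ≤ q ^ (d - m) := by
  obtain hmd | hdm := le_total m d
  · rw [← Nat.sub_add_cancel hmd, pow_add] at h
    exact Nat.le_of_mul_le_mul_right h (by positivity)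
  · have ha : a * q ^ m ≤ 1 * q ^ m := by simpa using h.trans (Nat.pow_le_pow_right hq hdm)
    rw [Nat.sub_eq_zero_of_le hdm, pow_zero]
    exact Nat.le_of_mul_le_mul_right ha (by positivity)

lemma ncard_avoiding_le_pow_sub {α : Type*} {A : Set α} {w : List α} (hA : A.Finite)
    (hA0 : A.Nonempty) (hw : ∀ a ∈ w, a ∈ A) {L M : ℕ} (hM : M * Real.log A.ncard ≤ L) :
    (avoiding A w (w.length * A.ncard ^ w.length * L)).ncard
      ≤ A.ncard ^ (w.length * A.ncard ^ w.length * L - M) := by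
  have hq : 0 < A.ncard := (Set.ncard_pos hA).2 hA0
  set q := A.ncard
  set Q := q ^ w.length with hQ
  have hQ1 : 1 ≤ Q := Nat.one_le_pow _ _ hq
  have hqM : (q : ℝ) ^ M ≤ Real.exp L := by
    rwa [← Real.log_le_iff_le_exp (by positivity), Real.log_pow]
  have hcard : (avoiding A w (w.length * Q * L)).ncard ≤ (Q - 1) ^ (Q * L) := by
    rw [mul_assoc]
    exact ncard_avoiding_length_mul_le hA hw _
  have hreal : (((Q - 1) ^ (Q * L) * q ^ M : ℕ) : ℝ) ≤ ((Q ^ (Q * L) : ℕ) : ℝ) := by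
    have hQ0 : (0 : ℝ) ≤ Q - 1 := sub_nonneg.2 (by exact_mod_cast hQ1)
    push_cast [Nat.cast_sub hQ1]
    calc ((Q : ℝ) - 1) ^ (Q * L) * (q : ℝ) ^ M ≤ ((Q : ℝ) - 1) ^ (Q * L) * Real.exp L := by
          gcongr
      _ ≤ (Q : ℝ) ^ (Q * L) := sub_one_pow_mul_mul_exp_le hQ1 L
  refine le_pow_sub_of_mul_pow_le_pow hq ?_
  calc (avoiding A w (w.length * Q * L)).ncard * q ^ M ≤ (Q - 1) ^ (Q * L) * q ^ M := by gcongr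
    _ ≤ Q ^ (Q * L) := by exact_mod_cast hreal
    _ = q ^ (w.length * Q * L) := by rw [mul_assoc, pow_mul q, ← hQ]

lemma log_le_clog_mul_log {b : ℕ} (hb : 2 ≤ b) (n : ℕ) :
    Real.log n ≤ Nat.clog b n * Real.log b := by
  have hlog : 0 < Real.log b := Real.log_pos (by exact_mod_cast hb)
  rw [← div_le_iff₀ hlog, ← Real.natCeil_logb_natCast]
  exact Nat.le_ceil _

lemma clog_sub_one_mul_log_le {b : ℕ} (hb : 2 ≤ b) (n : ℕ) :
    ((Nat.clog b n : ℝ) - 1) * Real.log b ≤ Real.log n := by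
  have hlog : 0 < Real.log b := Real.log_pos (by exact_mod_cast hb)
  have hlogb : 0 ≤ Real.logb b n := div_nonneg (Real.log_natCast_nonneg n) hlog.le
  rw [← le_div_iff₀ hlog, ← Real.natCeil_logb_natCast, sub_le_iff_le_add]
  exact (Nat.ceil_lt_add_one hlogb).le

lemma mul_log_le_clog_two (n : ℕ) : 1.4426 * Real.log n ≤ Nat.clog 2 n := by
  have hclog : Real.log n ≤ Nat.clog 2 n * Real.log 2 := by
    exact_mod_cast log_le_clog_mul_log le_rfl n
  calc 1.4426 * Real.log n ≤ Nat.clog 2 n * (1.4426 * Real.log 2) := by linarith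
    _ ≤ Nat.clog 2 n :=
      mul_le_of_le_one_right (Nat.cast_nonneg _) (by linarith [Real.log_two_lt_d9])

lemma mul_log_sub_one_le_of_rpow_le {b x c a : ℝ} (hb : 1 < b) (hc : 0 < c)
    (h : b ^ ((a - Real.logb b (Real.exp 1)) / c) ≤ x) :
    a * Real.log b - 1 ≤ c * Real.log x := by
  have hlog : 0 < Real.log b := Real.log_pos hb
  have hx : 0 < x := (Real.rpow_pos_of_pos (by linarith) _).trans_le h
  rw [Real.rpow_le_iff_le_log (by linarith) hx, Real.logb, Real.log_exp] at h
  calc a * Real.log b - 1 = c * ((a - 1 / Real.log b) / c * Real.log b) := by field_simp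
    _ ≤ c * Real.log x := by gcongr

lemma clog_add_sub_one_mul_log_le_clog_two {q n : ℕ} {a : ℝ} (hq : 2 ≤ q)
    (ha : 10.4 ≤ a * Real.log q) (hn : a * Real.log q - 1 ≤ 0.4 * Real.log n) :
    (Nat.clog q n + a - 1) * Real.log q ≤ Nat.clog 2 n := by
  calc (Nat.clog q n + a - 1) * Real.log q
      = (Nat.clog q n - 1) * Real.log q + a * Real.log q := by ring
    _ ≤ Real.log n + 0.4426 * Real.log n :=
      add_le_add (clog_sub_one_mul_log_le hq n) (by linarith)
    _ = 1.4426 * Real.log n := by ring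
    _ ≤ Nat.clog 2 n := mul_log_le_clog_two n

lemma clog_two_add_sub_one_mul_log_two_le {n : ℕ} {a : ℝ} (ha : 6 ≤ a)
    (hn : a * Real.log 2 - 1 ≤ 0.4 * Real.log n) :
    (Nat.clog 2 n + a - 1) * Real.log 2 ≤ Nat.clog 2 n := by
  have hl := Real.log_two_gt_d9
  have hl' := Real.log_two_lt_d9
  have hL := mul_log_le_clog_two n
  have hal : 6 * Real.log 2 ≤ a * Real.log 2 := by gcongr
  have hslope : (Nat.clog 2 n : ℝ) * Real.log 2 ≤ Nat.clog 2 n * 0.6932 := by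
    gcongr
    linarith
  calc (Nat.clog 2 n + a - 1) * Real.log 2
      = Nat.clog 2 n * Real.log 2 + (a - 1) * Real.log 2 := by ring
    _ ≤ Nat.clog 2 n * 0.6932 + 0.3068 * Nat.clog 2 n := add_le_add hslope (by linarith)
    _ = Nat.clog 2 n := by ring

lemma clog_three_add_eight_mul_log_three_le_clog_two {n : ℕ}
    (hn : 9 * Real.log 3 - 1 ≤ 0.4 * Real.log n) :
    (Nat.clog 3 n + 8) * Real.log 3 ≤ Nat.clog 2 n := by
  have hl3 := Real.log_three_gt_d9
  have hl3' := Real.log_three_lt_d9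
  have hm : ((Nat.clog 3 n : ℝ) - 1) * Real.log 3 ≤ Real.log n := by
    exact_mod_cast clog_sub_one_mul_log_le (by norm_num) n
  -- `23` lies between `9 log 3 / 0.4426` and `33 - 9 log 3`.
  obtain hsmall | hlarge := le_total (Real.log n) 23
  · have hclog : Real.log n ≤ Nat.clog 2 n * Real.log 2 := by
      exact_mod_cast log_le_clog_mul_log le_rfl n
    have hlt : (32 : ℝ) < Nat.clog 2 n :=
      lt_of_mul_lt_mul_right (by linarith [Real.log_two_lt_d9]) (Real.log_nonneg one_le_two)
    have hL : (33 : ℝ) ≤ Nat.clog 2 n := by exact_mod_cast hlt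
    linarith
  · linarith [mul_log_le_clog_two n]

lemma le_six_mul_add_three_mul_log {q t : ℕ} (hq : 3 ≤ q) (ht : 1 ≤ t) (h : ¬(q = 3 ∧ t = 1)) :
    10.4 ≤ (6 * t + 3) * Real.log q := by
  have hlog {m : ℕ} (hm : 0 < m) (hmq : m ≤ q) : Real.log m ≤ Real.log q :=
    Real.log_le_log (by exact_mod_cast hm) (by exact_mod_cast hmq)
  obtain rfl | ht2 := ht.eq_or_lt
  · have hlog4 : Real.log (4 : ℕ) = 2 * Real.log 2 := by
      rw [show ((4 : ℕ) : ℝ) = 2 ^ 2 by norm_num, Real.log_pow, Nat.cast_ofNat]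
    have := hlog (m := 4) (by norm_num) (by omega)
    push_cast at *
    linarith [Real.log_two_gt_d9]
  · have ht2' : (2 : ℝ) ≤ t := by exact_mod_cast ht2
    have hlog3 : 1.09 ≤ Real.log q := by
      have := hlog (m := 3) (by norm_num) hq
      push_cast at this
      linarith [Real.log_three_gt_d9]
    calc (10.4 : ℝ) ≤ (6 * 2 + 3) * 1.09 := by norm_num
      _ ≤ (6 * t + 3) * Real.log q := by gcongr

lemma clog_add_mul_log_le_clog_two {q t n : ℕ} (hq : 2 ≤ q) (ht : 1 ≤ t)
    (hn : (q : ℝ) ^ ((((6 : ℝ) * t + 3) - Real.logb q (Real.exp 1)) / 0.4) ≤ n) :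
    ((Nat.clog q n + 6 * t + 2 : ℕ) : ℝ) * Real.log q ≤ Nat.clog 2 n := by
  have hlog : (6 * t + 3) * Real.log q - 1 ≤ 0.4 * Real.log n :=
    mul_log_sub_one_le_of_rpow_le (by exact_mod_cast hq) (by norm_num) hn
  suffices h : (Nat.clog q n + (6 * t + 3) - 1) * Real.log q ≤ Nat.clog 2 n by
    push_cast
    linarith
  obtain rfl | hq3 := hq.eq_or_lt
  · have ht' : (1 : ℝ) ≤ t := by exact_mod_cast ht
    rw [Nat.cast_ofNat] at hlog ⊢
    exact clog_two_add_sub_one_mul_log_two_le (by linarith) hlog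
  by_cases h31 : q = 3 ∧ t = 1
  · obtain ⟨rfl, rfl⟩ := h31
    push_cast at hlog ⊢
    linarith [clog_three_add_eight_mul_log_three_le_clog_two (n := n) (by linarith)]
  · exact clog_add_sub_one_mul_log_le_clog_two hq (le_six_mul_add_three_mul_log hq3 ht h31) hlog

theorem pattern_free_strings_compressible_general {α : Type*} {A : Set α} {w : List α}
    {q t n : ℕ} (hq : 2 ≤ q) (ht : 1 ≤ t) (hA : A.ncard = q) (hw : w ∈ words A (2 * t))
    {δ : ℕ} (hδ : δ = 2 * t * q ^ (2 * t) * Nat.clog 2 n)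
    (hn : (q : ℝ) ^ ((((6 : ℝ) * t + 3) - Real.logb q (Real.exp 1)) / 0.4) ≤ n) :
    (avoiding A w δ).ncard ≤ q ^ (δ - Nat.clog q n - 6 * t - 2) := by
  obtain ⟨hlen, hwA⟩ := hw
  have hpos : 0 < A.ncard := by omega
  have hcard := ncard_avoiding_le_pow_sub (Set.finite_of_ncard_pos hpos)
    (Set.nonempty_of_ncard_ne_zero hpos.ne') hwA (hA ▸ clog_add_mul_log_le_clog_two hq ht hn)
  rw [hlen, hA, ← hδ] at hcard
  simpa only [Nat.sub_sub, add_assoc] using hcard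

/-- Lemma 4: with `δ = 2t·q^{2t}·⌈log₂ n⌉` and
`n ≥ q^{(6t+3−log_q e)/0.4}`, the set `S` of strings of length `δ` over
`Σ_q` containing no occurrence of `p = 0^t 1^t` has size at most
`q^{δ − ⌈log_q n⌉ − 6t − 2}`; equivalently there is an injection
`g : S → Σ_q^{δ − ⌈log_q n⌉ − 6t − 2}`. -/
theorem pattern_free_strings_compressible
    (q t n : ℕ) (hq : 2 ≤ q) (ht : 1 ≤ t)
    (δ : ℕ) (hδ : δ = 2 * t * q ^ (2 * t) * Nat.clog 2 n)
    (hn : (q : ℝ) ^ ((((6 : ℝ) * t + 3) - Real.logb q (Real.exp 1)) / 0.4) ≤ n) :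
    {x : List ℕ | x.length = δ ∧ (∀ a ∈ x, a < q) ∧
        ¬∃ i, (x.drop i).take (2 * t) = pat t}.ncard
      ≤ q ^ (δ - Nat.clog q n - 6 * t - 2) := by
  have hpat := pat_mem_words hq t
  simpa only [avoiding_Iio_eq, hpat.1] using
    pattern_free_strings_compressible_general hq ht (Set.ncard_Iio_nat q) hpat hδ hn
end
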